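/- Let F be a field, let a ≥ 2 be an integer, b = 1, and let t₁, t₂ ∈ F be distinct nonzero elements. Set e₁ = t₁ + t₂ and e₂ = t₁t₂. Then in the polynomial ring P = F[x₀,…,x_a, y₀, y₁] one has the ideal equality I₂(MX) + J_e = I₂(m₁) ∩ I₂(m₂), where J_e is the ideal generated by the cubic forms Q_{i,0} := x_{i+2}y₀² − e₁ x_{i+1}y₀y₁ + e₂ x_i y₁² for 0 ≤ i ≤ a−2, and for ℓ = 1, 2, m_ℓ is the 2×(a+1) matrix with rows (x₀,…,x_{a−1}, y₀) and (x₁,…,x_a, t_ℓ y₁). -/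

import Mathlib

open MvPolynomial

noncomputable section

/-- The polynomial ring `F[x₀,…,x_a, y₀, y₁]` (the case `b = 1`). -/
abbrev KPoly (F : Type*) [CommRing F] (a : ℕ) : Type _ :=
  MvPolynomial (Fin (a + 1) ⊕ Fin 2) F

variable (F : Type*) [CommRing F] (a : ℕ)

/-- The variable `x_i`. -/
def xv (i : Fin (a + 1)) : KPoly F a := X (Sum.inl i)

/-- The variable `y_j` for `j = 0, 1`. -/
def yv (j : Fin 2) : KPoly F a := X (Sum.inr j)

/-- The ideal generated by the 2×2 minors of the matrix `MX` with rows
`(x₀,…,x_{a−1})` and `(x₁,…,x_a)`. -/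
def I2MX : Ideal (KPoly F a) :=
  Ideal.span { f | ∃ c c' : Fin a,
    f = xv F a c.castSucc * xv F a c'.succ - xv F a c'.castSucc * xv F a c.succ }

/-- The first row `(x₀,…,x_{a−1}, y₀)` of the matrix `m_ℓ`. -/
def mrow1 : Fin a ⊕ Fin 1 → KPoly F a
  | Sum.inl c => xv F a c.castSucc
  | Sum.inr _ => yv F a 0

/-- The second row `(x₁,…,x_a, t·y₁)` of the matrix `m_ℓ`. -/
def mrow2 (t : F) : Fin a ⊕ Fin 1 → KPoly F a
  | Sum.inl c => xv F a c.succ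
  | Sum.inr _ => C t * yv F a 1

/-- The ideal generated by the 2×2 minors of the `2×(a+1)` matrix `m_ℓ`
with rows `(x₀,…,x_{a−1}, y₀)` and `(x₁,…,x_a, t·y₁)`. -/
def I2M (t : F) : Ideal (KPoly F a) :=
  Ideal.span { f | ∃ c c' : Fin a ⊕ Fin 1,
    f = mrow1 F a c * mrow2 F a t c' - mrow1 F a c' * mrow2 F a t c }

/-- The ideal `J_e` generated by the cubic forms
`Q_{i,0} = x_{i+2}y₀² − e₁x_{i+1}y₀y₁ + e₂x_iy₁²` for `0 ≤ i ≤ a−2`. -/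
def Je (e1 e2 : F) : Ideal (KPoly F a) :=
  Ideal.span { f | ∃ i : ℕ, ∃ _ : i + 2 ≤ a,
    f = xv F a ⟨i + 2, by omega⟩ * yv F a 0 ^ 2
      - C e1 * (xv F a ⟨i + 1, by omega⟩ * (yv F a 0 * yv F a 1))
      + C e2 * (xv F a ⟨i, by omega⟩ * yv F a 1 ^ 2) }

/-- Greedy normal form of a product of `k` terms of the sequence `x_0,…,x_a` with index sum `q`. -/
def nf {R : Type*} [CommRing R] (a : ℕ) (x : ℕ → R) : ℕ → ℕ → R
  | 0, _ => 1
  | k + 1, q => x (min a q) * nf a x k (q - min a q)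

theorem swap_aux {R : Type*} [CommRing R] (a : ℕ) (x : ℕ → R)
    (hx : ∀ i j, i < a → j < a → x i * x (j + 1) = x j * x (i + 1)) :
    ∀ d i j, i + d ≤ a → j + d ≤ a → x i * x (j + d) = x (i + d) * x j := by
  intro d
  induction d with
  | zero => intros; rfl
  | succ d ih =>
    intro i j hi hj
    have h1 := hx i (j + d) (by omega) (by omega)
    have h2 := ih (i + 1) j (by omega) (by omega)
    rw [← add_assoc, h1, mul_comm, h2]
    congr 2
    omega

theorem swap_sum {R : Type*} [CommRing R] (a : ℕ) (x : ℕ → R)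
    (hx : ∀ i j, i < a → j < a → x i * x (j + 1) = x j * x (i + 1))
    (i j k l : ℕ) (hi : i ≤ a) (hj : j ≤ a) (hk : k ≤ a) (hl : l ≤ a) (h : i + j = k + l) :
    x i * x j = x k * x l := by
  rcases le_total i k with hik | hik
  · obtain ⟨d, rfl⟩ := Nat.exists_eq_add_of_le hik
    obtain rfl : j = l + d := by omega
    exact swap_aux a x hx d i l hk hj
  · obtain ⟨d, rfl⟩ := Nat.exists_eq_add_of_le hik
    obtain rfl : l = j + d := by omega
    exact (swap_aux a x hx d k j hi hl).symm

theorem nf_mul {R : Type*} [CommRing R] (a : ℕ) (x : ℕ → R)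
    (hx : ∀ i j, i < a → j < a → x i * x (j + 1) = x j * x (i + 1)) :
    ∀ k q i, q ≤ a * k → i ≤ a → nf a x k q * x i = nf a x (k + 1) (q + i) := by
  intro k
  induction k with
  | zero =>
    intro q i hq hi
    obtain rfl : q = 0 := by simpa using hq
    simp [nf, hi]
  | succ k ih =>
    intro q i hq hi
    rw [nf, nf]
    have hq' : q - min a q ≤ a * k := by
      rw [mul_add] at hq
      omega
    have h1 : q + i - min a (q + i) = (q - min a q) + (i + min a q - min a (q + i)) := by omega
    rw [h1, ← ih _ _ hq' (by omega)]
    have h2 := swap_sum a x hx (min a q) i (min a (q + i)) (i + min a q - min a (q + i))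
      (by omega) hi (by omega) (by omega) (by omega)
    linear_combination (nf a x k (q - min a q)) * h2

/-- The ring `F[s, u, y₁, y₀]`. -/
abbrev SPoly (F : Type*) [CommRing F] : Type _ := MvPolynomial (Fin 2 ⊕ Fin 2) F

/-- The parametrization `x_i ↦ s^{a-i} u^i`. -/
def phi : KPoly F a →ₐ[F] SPoly F :=
  aeval (Sum.elim (fun i => X (Sum.inl 0) ^ (a - (i : ℕ)) * X (Sum.inl 1) ^ (i : ℕ))
    ![X (Sum.inr 1), X (Sum.inr 0)])

/-- The images of the `x_i` modulo `I₂(MX)`. -/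
def xq (n : ℕ) : KPoly F a ⧸ I2MX F a :=
  if h : n < a + 1 then Ideal.Quotient.mk _ (xv F a ⟨n, h⟩) else 0

theorem xq_rel (i j : ℕ) (hi : i < a) (hj : j < a) :
    xq F a i * xq F a (j + 1) = xq F a j * xq F a (i + 1) := by
  unfold xq
  rw [dif_pos (by omega), dif_pos (by omega), dif_pos (by omega), dif_pos (by omega),
    ← map_mul, ← map_mul, Ideal.Quotient.eq]
  exact Ideal.subset_span ⟨⟨i, hi⟩, ⟨j, hj⟩, rfl⟩

open Classical in
/-- Values of the partial inverse on monomials. -/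
def psiFun (d : Fin 2 ⊕ Fin 2 →₀ ℕ) : KPoly F a ⧸ I2MX F a :=
  if a ∣ d (Sum.inl 0) + d (Sum.inl 1) then
    nf a (xq F a) ((d (Sum.inl 0) + d (Sum.inl 1)) / a) (d (Sum.inl 1)) *
      (Ideal.Quotient.mk _ (yv F a 0) ^ d (Sum.inr 1) *
        Ideal.Quotient.mk _ (yv F a 1) ^ d (Sum.inr 0))
  else 0

/-- The partial inverse of the parametrization. -/
def psi : SPoly F →ₗ[F] KPoly F a ⧸ I2MX F a :=
  (basisMonomials (Fin 2 ⊕ Fin 2) F).constr F (psiFun F a)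

theorem psi_monomial (d : Fin 2 ⊕ Fin 2 →₀ ℕ) (c : F) :
    psi F a (monomial d c) = c • psiFun F a d := by
  have h : (monomial d c : SPoly F) = c • (basisMonomials (Fin 2 ⊕ Fin 2) F) d := by
    simp [smul_monomial]
  rw [h, map_smul, psi, Module.Basis.constr_basis]

theorem psiFun_x (ha : 0 < a) (d : Fin 2 ⊕ Fin 2 →₀ ℕ) (i : ℕ) (hi : i ≤ a) :
    psiFun F a (d + (Finsupp.single (Sum.inl 0) (a - i) + Finsupp.single (Sum.inl 1) i)) =
      psiFun F a d * xq F a i := by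
  unfold psiFun
  simp only [Finsupp.add_apply, Finsupp.single_apply, Sum.inl.injEq, reduceCtorEq, if_true,
    if_false, add_zero, zero_add, zero_ne_one, one_ne_zero]
  have h : d (Sum.inl 0) + (a - i) + (d (Sum.inl 1) + i) =
    d (Sum.inl 0) + d (Sum.inl 1) + a := by omega
  simp only [h, Nat.dvd_add_self_right]
  split_ifs with hd
  · rw [Nat.add_div_right _ ha, ← nf_mul a (xq F a) (xq_rel F a) _ _ i _ hi]
    · ring
    · rw [Nat.mul_div_cancel' hd]
      omega
  · simp

theorem psiFun_y0 (d : Fin 2 ⊕ Fin 2 →₀ ℕ) :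
    psiFun F a (d + Finsupp.single (Sum.inr 1) 1) =
      psiFun F a d * Ideal.Quotient.mk _ (yv F a 0) := by
  unfold psiFun
  simp only [Finsupp.add_apply, Finsupp.single_apply, Sum.inr.injEq, reduceCtorEq, if_true,
    if_false, add_zero, zero_add, zero_ne_one, one_ne_zero]
  split_ifs with hd
  · ring
  · simp

theorem psiFun_y1 (d : Fin 2 ⊕ Fin 2 →₀ ℕ) :
    psiFun F a (d + Finsupp.single (Sum.inr 0) 1) =
      psiFun F a d * Ideal.Quotient.mk _ (yv F a 1) := by
  unfold psiFun
  simp only [Finsupp.add_apply, Finsupp.single_apply, Sum.inr.injEq, reduceCtorEq, if_true,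
    if_false, add_zero, zero_add, zero_ne_one, one_ne_zero]
  split_ifs with hd
  · ring
  · simp

theorem psi_mul_of (e : Fin 2 ⊕ Fin 2 →₀ ℕ) (z : KPoly F a ⧸ I2MX F a)
    (h : ∀ d, psiFun F a (d + e) = psiFun F a d * z) (g : SPoly F) :
    psi F a (g * monomial e 1) = psi F a g * z := by
  induction g using MvPolynomial.induction_on' with
  | monomial d c => rw [monomial_mul, mul_one, psi_monomial, psi_monomial, h, smul_mul_assoc]
  | add p q hp hq => rw [add_mul, map_add, map_add, hp, hq, add_mul]

theorem psi_mul (ha : 0 < a) (f : KPoly F a) : ∀ g : SPoly F,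
    psi F a (g * phi F a f) = psi F a g * Ideal.Quotient.mk _ f := by
  induction f using MvPolynomial.induction_on with
  | C c =>
    intro g
    have h1 : phi F a (C c) = C c := by simp [phi]
    have h2 : (Ideal.Quotient.mk (I2MX F a)) (C c) = algebraMap F _ c := rfl
    rw [h1, h2, mul_comm, ← smul_eq_C_mul, map_smul]
    exact (Algebra.smul_def c (psi F a g)).trans (mul_comm _ _)
  | add p q hp hq => intro g; rw [map_add, mul_add, map_add, hp, hq, map_add, mul_add]
  | mul_X p n hp =>
    intro g
    rw [map_mul (phi F a), ← mul_assoc, map_mul (Ideal.Quotient.mk (I2MX F a)), ← mul_assoc, ← hp]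
    generalize g * phi F a p = g
    rcases n with i | j
    · have h1 : phi F a (X (Sum.inl i)) =
          monomial (Finsupp.single (Sum.inl 0) (a - (i : ℕ)) +
            Finsupp.single (Sum.inl 1) (i : ℕ)) 1 := by
        simp [phi, X_pow_eq_monomial, monomial_mul]
      have h2 : Ideal.Quotient.mk (I2MX F a) (X (Sum.inl i)) = xq F a i := by
        rw [xq, dif_pos i.isLt, xv]
      rw [h1, h2]
      exact psi_mul_of F a _ _ (fun d => psiFun_x F a ha d i (by omega)) g
    · fin_cases j
      · have h1 : phi F a (X (Sum.inr 0)) = monomial (Finsupp.single (Sum.inr 1) 1) 1 := by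
          rw [phi, aeval_X]; rfl
        exact h1 ▸ psi_mul_of F a _ _ (psiFun_y0 F a) g
      · have h1 : phi F a (X (Sum.inr 1)) = monomial (Finsupp.single (Sum.inr 0) 1) 1 := by
          rw [phi, aeval_X]; rfl
        exact h1 ▸ psi_mul_of F a _ _ (psiFun_y1 F a) g

theorem psi_phi (ha : 0 < a) (f : KPoly F a) : psi F a (phi F a f) = Ideal.Quotient.mk _ f := by
  have h := psi_mul F a ha f 1
  have h1 : psi F a 1 = 1 := by
    have h2 : (1 : SPoly F) = monomial 0 1 := rfl
    rw [h2, psi_monomial]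
    simp [psiFun, nf]
  rwa [one_mul, h1, one_mul] at h

/-- The form `t s y₁ - u y₀`. -/
def Lf (t : F) : SPoly F :=
  C t * (X (Sum.inl 0) * X (Sum.inr 0)) - X (Sum.inl 1) * X (Sum.inr 1)

theorem phi_xv (i : Fin (a + 1)) :
    phi F a (xv F a i) = X (Sum.inl 0) ^ (a - (i : ℕ)) * X (Sum.inl 1) ^ (i : ℕ) := by
  simp [phi, xv]

theorem phi_yv0 : phi F a (yv F a 0) = X (Sum.inr 1) := by simp [phi, yv]

theorem phi_yv1 : phi F a (yv F a 1) = X (Sum.inr 0) := by simp [phi, yv]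

theorem phi_C (c : F) : phi F a (C c) = C c := by simp [phi]

theorem phi_I2M (t : F) (f : KPoly F a) (hf : f ∈ I2M F a t) : Lf F t ∣ phi F a f := by
  have h : I2M F a t ≤ (Ideal.span {Lf F t}).comap (phi F a) := by
    rw [I2M, Ideal.span_le]
    rintro _ ⟨c, c', rfl⟩
    simp only [SetLike.mem_coe, Ideal.mem_comap, Ideal.mem_span_singleton]
    have key : ∀ c : Fin a, ∃ m, phi F a (mrow1 F a (Sum.inl c)) = X (Sum.inl 0) * m ∧
        phi F a (mrow2 F a t (Sum.inl c)) = X (Sum.inl 1) * m := by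
      intro c
      refine ⟨X (Sum.inl 0) ^ (a - 1 - (c : ℕ)) * X (Sum.inl 1) ^ (c : ℕ), ?_, ?_⟩
      · have : a - (c : ℕ) = (a - 1 - c) + 1 := by omega
        simp only [mrow1, phi_xv, Fin.val_castSucc, this]
        ring
      · have : a - ((c : ℕ) + 1) = a - 1 - c := by omega
        simp only [mrow2, phi_xv, Fin.val_succ, this]
        ring
    rcases c with c | c <;> rcases c' with c' | c'
    · obtain ⟨m, h1, h2⟩ := key c
      obtain ⟨m', h1', h2'⟩ := key c'
      rw [map_sub, map_mul, map_mul, h1, h2, h1', h2']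
      exact ⟨0, by ring⟩
    · obtain ⟨m, h1, h2⟩ := key c
      rw [map_sub, map_mul, map_mul, h1, h2]
      simp only [mrow1, mrow2, map_mul, phi_yv0, phi_yv1, phi_C]
      exact ⟨m, by rw [Lf]; ring⟩
    · obtain ⟨m, h1, h2⟩ := key c'
      rw [map_sub, map_mul, map_mul, h1, h2]
      simp only [mrow1, mrow2, map_mul, phi_yv0, phi_yv1, phi_C]
      exact ⟨-m, by rw [Lf]; ring⟩
    · simp [mrow1, mrow2]
  exact Ideal.mem_span_singleton.1 (h hf)

theorem Lf_prime {K : Type*} [Field K] (t : K) (ht : t ≠ 0) : Prime (Lf K t) := by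
  rw [← irreducible_iff_prime]
  let c : Fin 2 →₀ K := Finsupp.equivFunOnFinite.symm ![t, -1]
  have h : Lf K t = sumSMulXSMulY c := by
    rw [sumSMulXSMulY, Finsupp.linearCombination_apply, Finsupp.sum_fintype _ _ (by simp)]
    simp [c, Lf, smul_eq_C_mul, sub_eq_add_neg]
  rw [h]
  apply irreducible_sumSMulXSMulY
  · exact ⟨0, by simp [c, ht], 1, by simp [c], by simp⟩
  · intro r hr
    have := hr 1
    simpa [c] using this

theorem Lf_not_dvd {K : Type*} [Field K] (t1 t2 : K) (hne : t1 ≠ t2) : ¬ Lf K t2 ∣ Lf K t1 := by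
  rintro ⟨g, hg⟩
  have := congrArg (eval (Sum.elim ![1, t2] ![1, 1])) hg
  simp [Lf] at this
  exact hne (sub_eq_zero.1 this)

theorem psi_mem (ha : 2 ≤ a) (t1 t2 : F) (g : SPoly F) :
    psi F a (g * (Lf F t1 * Lf F t2)) ∈
      (Je F a (t1 + t2) (t1 * t2)).map (Ideal.Quotient.mk (I2MX F a)) := by
  induction g using MvPolynomial.induction_on' with
  | add p q hp hq => rw [add_mul, map_add]; exact Ideal.add_mem _ hp hq
  | monomial d c =>
    by_cases hd : a - 2 ≤ d (Sum.inl 0) + d (Sum.inl 1)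
    · obtain ⟨i, hi, hi1, hi2⟩ : ∃ i, i + 2 ≤ a ∧ i ≤ d (Sum.inl 1) ∧
          a - 2 - i ≤ d (Sum.inl 0) :=
        ⟨min (a - 2) (d (Sum.inl 1)), by omega, by omega, by omega⟩
      let e : Fin 2 ⊕ Fin 2 →₀ ℕ :=
        Finsupp.single (Sum.inl 0) (a - 2 - i) + Finsupp.single (Sum.inl 1) i
      have he : e ≤ d := by
        intro z
        rcases z with z | z <;> fin_cases z <;> simp [e, Finsupp.single_apply, hi1, hi2]
      obtain ⟨d', rfl⟩ := exists_add_of_le he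
      have h1 : (monomial (e + d') c : SPoly F) = monomial d' c *
          (X (Sum.inl 0) ^ (a - 2 - i) * X (Sum.inl 1) ^ i) := by
        simp [e, X_pow_eq_monomial, monomial_mul, add_comm]
      have h2 : phi F a (xv F a ⟨i + 2, by omega⟩ * yv F a 0 ^ 2
          - C (t1 + t2) * (xv F a ⟨i + 1, by omega⟩ * (yv F a 0 * yv F a 1))
          + C (t1 * t2) * (xv F a ⟨i, by omega⟩ * yv F a 1 ^ 2)) =
          (X (Sum.inl 0) ^ (a - 2 - i) * X (Sum.inl 1) ^ i) * (Lf F t1 * Lf F t2) := by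
        obtain ⟨b, rfl⟩ := Nat.exists_eq_add_of_le hi
        have e1 : i + 2 + b - (i + 2) = b := by omega
        have e2 : i + 2 + b - (i + 1) = b + 1 := by omega
        have e3 : i + 2 + b - i = b + 2 := by omega
        have e4 : i + 2 + b - 2 - i = b := by omega
        simp only [map_add, map_sub, map_mul, map_pow, phi_xv, phi_yv0, phi_yv1, phi_C,
          e1, e2, e3, e4, Lf]
        ring
      rw [h1, mul_assoc, ← h2, psi_mul F a (by omega)]
      exact Ideal.mul_mem_left _ _ (Ideal.mem_map_of_mem _ (Ideal.subset_span ⟨i, hi, rfl⟩))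
    · have key : ∀ e : Fin 2 ⊕ Fin 2 →₀ ℕ, e (Sum.inl 0) + e (Sum.inl 1) = 2 → ∀ c',
          psi F a (monomial (d + e) c') = 0 := by
        intro e he c'
        rw [psi_monomial, psiFun, if_neg, smul_zero]
        intro hdvd
        have := Nat.le_of_dvd (by simp only [Finsupp.add_apply]; omega) hdvd
        simp only [Finsupp.add_apply] at this
        omega
      have h3 : monomial d c * (Lf F t1 * Lf F t2) =
          monomial (d + (Finsupp.single (Sum.inl 0) 2 + Finsupp.single (Sum.inr 0) 2))
            (c * (t1 * t2))
          - monomial (d + (Finsupp.single (Sum.inl 0) 1 + Finsupp.single (Sum.inl 1) 1 +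
              Finsupp.single (Sum.inr 0) 1 + Finsupp.single (Sum.inr 1) 1)) (c * (t1 + t2))
          + monomial (d + (Finsupp.single (Sum.inl 1) 2 + Finsupp.single (Sum.inr 1) 2)) c := by
        simp only [monomial_eq, Finsupp.prod_add_index', pow_add, pow_zero, implies_true,
          Finsupp.prod_single_index, Lf, map_mul, map_add]
        ring
      rw [h3, map_add, map_sub, key _ (by simp), key _ (by simp), key _ (by simp)]
      simp

theorem lhs_le (t1 t2 : F) :
    I2MX F a + Je F a (t1 + t2) (t1 * t2) ≤ I2M F a t1 := by
  rw [Submodule.add_eq_sup, sup_le_iff]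
  constructor
  · rw [I2MX, Ideal.span_le]
    rintro _ ⟨c, c', rfl⟩
    exact Ideal.subset_span ⟨Sum.inl c, Sum.inl c', rfl⟩
  · rw [Je, Ideal.span_le]
    rintro _ ⟨i, hi, rfl⟩
    have m1 : xv F a ⟨i + 1, by omega⟩ * (C t1 * yv F a 1) - yv F a 0 * xv F a ⟨i + 2, by omega⟩
        ∈ I2M F a t1 :=
      Ideal.subset_span ⟨Sum.inl ⟨i + 1, by omega⟩, Sum.inr 0, rfl⟩
    have m2 : xv F a ⟨i, by omega⟩ * (C t1 * yv F a 1) - yv F a 0 * xv F a ⟨i + 1, by omega⟩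
        ∈ I2M F a t1 :=
      Ideal.subset_span ⟨Sum.inl ⟨i, by omega⟩, Sum.inr 0, rfl⟩
    have := Ideal.add_mem _ (Ideal.mul_mem_left _ (-yv F a 0) m1)
      (Ideal.mul_mem_left _ (C t2 * yv F a 1) m2)
    rw [SetLike.mem_coe]
    convert this using 1
    rw [map_add, map_mul]
    ring

/-- For a field `F`, an integer `a ≥ 2`, `b = 1`, and distinct
nonzero `t₁, t₂ ∈ F`, with `e₁ = t₁ + t₂`, `e₂ = t₁t₂`, one has
`I₂(MX) + J_e = I₂(m₁) ∩ I₂(m₂)` in `F[x₀,…,x_a, y₀, y₁]`. -/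
theorem stmt1 (F : Type*) [Field F] (a : ℕ) (ha : 2 ≤ a)
    (t1 t2 : F) (ht1 : t1 ≠ 0) (ht2 : t2 ≠ 0) (hne : t1 ≠ t2) :
    I2MX F a + Je F a (t1 + t2) (t1 * t2) = I2M F a t1 ⊓ I2M F a t2 := by
  apply le_antisymm
  · refine le_inf (lhs_le F a t1 t2) ?_
    rw [add_comm t1 t2, mul_comm t1 t2]
    exact lhs_le F a t2 t1
  · rintro f ⟨h1, h2⟩
    obtain ⟨g, hg⟩ := phi_I2M F a t1 f h1
    have h3 := phi_I2M F a t2 f h2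
    rw [hg] at h3
    obtain ⟨k, rfl⟩ := ((Lf_prime t2 ht2).dvd_or_dvd h3).resolve_left (Lf_not_dvd t1 t2 hne)
    have h4 := psi_mem F a ha t1 t2 k
    have h5 : k * (Lf F t1 * Lf F t2) = phi F a f := by rw [hg]; ring
    rw [h5, psi_phi F a (by omega)] at h4
    have h6 := Ideal.mem_comap.2 h4
    rw [Ideal.comap_map_of_surjective _ Ideal.Quotient.mk_surjective, ← RingHom.ker_eq_comap_bot,
      Ideal.mk_ker] at h6
    rwa [Submodule.add_eq_sup, sup_comm]

end
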